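/- Let n ≥ 1. The map Φ_n : ℂ^n → ℂ^n defined by Φ_n(ζ_1, …, ζ_n) = ( x_1^{(n)}(ζ_1, …, ζ_n), …, x_n^{(n)}(ζ_1, …, ζ_n) ) is a bijection. -/

import Mathlib

/-- The singular part `(f)₋` of a Laurent series: the sum of its strictly
negative-degree terms. -/
noncomputable def singPart (f : LaurentSeries ℂ) : LaurentSeries ℂ where
  coeff k := if k < 0 then f.coeff k else 0
  isPWO_support' := by
    apply f.isPWO_support'.mono
    intro k hk
    simp only [Function.mem_support] at hk ⊢
    by_cases h : k < 0
    · simpa [h] using hk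
    · simp [h] at hk

/-- The recursively defined Laurent polynomials `x⁽ᵏ⁾(ζ₁, …, ζ_k)`:
`x⁽¹⁾ = ζ₁ z⁻¹` and
`x⁽ᵏ⁺¹⁾ = ((1+|ζ_{k+1}|²) Σ_{p=0}^k conj(ζ_{k+1})^p (x⁽ᵏ⁾)^{p+1} z^{p(k+1)})₋ + ζ_{k+1} z^{−k−1}`
(`ζ` is indexed starting at `1`; the base case is subsumed via `x⁽⁰⁾ = 0`). -/
noncomputable def xrec (ζ : ℕ → ℂ) : ℕ → LaurentSeries ℂ
  | 0 => 0
  | m + 1 =>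
      singPart (HahnSeries.single (0 : ℤ) (((1 + ‖ζ (m + 1)‖ ^ 2 : ℝ) : ℂ)) *
          ∑ p ∈ Finset.range (m + 1),
            HahnSeries.single (0 : ℤ) ((starRingEnd ℂ (ζ (m + 1))) ^ p) *
              xrec ζ m ^ (p + 1) * HahnSeries.single ((p : ℤ) * ((m : ℤ) + 1)) 1)
        + HahnSeries.single (-(m : ℤ) - 1) (ζ (m + 1))

/-- The map `Φ_n : ℂⁿ → ℂⁿ`, `Φ_n(ζ₁, …, ζ_n) = (x₁⁽ⁿ⁾(ζ), …, x_n⁽ⁿ⁾(ζ))`, where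
`x_j⁽ⁿ⁾` is the coefficient of `z^{-j}` in `x⁽ⁿ⁾`. -/
noncomputable def Phi (n : ℕ) (ζ : Fin n → ℂ) : Fin n → ℂ :=
  fun j =>
    (xrec (fun i => if h : i - 1 < n ∧ 1 ≤ i then ζ ⟨i - 1, h.1⟩ else 0) n).coeff
      (-((j : ℕ) : ℤ) - 1)

/-- `f` has no terms of degree below `N`. -/
def OrdGE (f : LaurentSeries ℂ) (N : ℤ) : Prop := ∀ i < N, f.coeff i = 0

theorem OrdGE.mul {f g : LaurentSeries ℂ} {N M : ℤ} (hf : OrdGE f N) (hg : OrdGE g M) :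
    OrdGE (f * g) (N + M) := by
  intro n hn
  rw [HahnSeries.coeff_mul]
  apply Finset.sum_eq_zero
  rintro ⟨i, j⟩ hij
  rw [Finset.mem_antidiagonal] at hij
  have h3 : i + j = n := hij.2.2
  by_cases hi : i < N
  · simp [hf i hi]
  · simp [hg j (by omega)]

theorem OrdGE.add {f g : LaurentSeries ℂ} {N : ℤ} (hf : OrdGE f N) (hg : OrdGE g N) :
    OrdGE (f + g) N := by
  intro n hn
  simp [hf n hn, hg n hn]

theorem OrdGE.mono {f : LaurentSeries ℂ} {N M : ℤ} (hf : OrdGE f N) (h : M ≤ N) :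
    OrdGE f M := fun i hi => hf i (by omega)

theorem ordGE_single (N : ℤ) (a : ℂ) : OrdGE (HahnSeries.single N a) N := by
  intro i hi
  exact HahnSeries.coeff_single_of_ne (by omega)

theorem OrdGE.pow {f : LaurentSeries ℂ} {N : ℤ} (hf : OrdGE f N) (p : ℕ) :
    OrdGE (f ^ p) (p * N) := by
  induction p with
  | zero =>
    simpa using ordGE_single 0 1
  | succ p ih =>
    rw [pow_succ]
    refine (ih.mul hf).mono ?_
    push_cast
    linarith

theorem ordGE_pow_sub {y y' : LaurentSeries ℂ} {m N : ℤ} (hy : OrdGE y (-m))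
    (hy' : OrdGE y' (-m)) (h : OrdGE (y - y') N) (p : ℕ) :
    OrdGE (y ^ (p + 1) - y' ^ (p + 1)) (N - p * m) := by
  induction p with
  | zero => simpa using h
  | succ p ih =>
    have e : y ^ (p + 1 + 1) - y' ^ (p + 1 + 1)
        = y ^ (p + 1) * (y - y') + (y ^ (p + 1) - y' ^ (p + 1)) * y' := by ring
    rw [e]
    refine OrdGE.add (((hy.pow (p + 1)).mul h).mono ?_) ((ih.mul hy').mono ?_) <;>
    · push_cast
      linarith

/-- The expression inside the singular part. -/
noncomputable def Uin (m : ℕ) (a c : ℂ) (y : LaurentSeries ℂ) : LaurentSeries ℂ :=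
  HahnSeries.single (0 : ℤ) a * ∑ p ∈ Finset.range (m + 1),
    HahnSeries.single (0 : ℤ) (c ^ p) * y ^ (p + 1) *
      HahnSeries.single ((p : ℤ) * ((m : ℤ) + 1)) 1

theorem Uin_sub {m : ℕ} {a c : ℂ} {y y' : LaurentSeries ℂ} {N : ℤ} (hy : OrdGE y (-m))
    (hy' : OrdGE y' (-m)) (h : OrdGE (y - y') N) :
    OrdGE (Uin m a c y - Uin m a c y' - HahnSeries.single (0 : ℤ) a * (y - y')) (N + 1) := by
  have e : Uin m a c y - Uin m a c y' - HahnSeries.single (0 : ℤ) a * (y - y')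
      = HahnSeries.single (0 : ℤ) a * ∑ p ∈ Finset.range m,
    HahnSeries.single (0 : ℤ) (c ^ (p + 1)) * (y ^ (p + 1 + 1) - y' ^ (p + 1 + 1)) *
      HahnSeries.single (((p + 1 : ℕ) : ℤ) * ((m : ℤ) + 1)) 1 := by
    have h1 : (HahnSeries.single (0 : ℤ) (1 : ℂ)) = 1 := rfl
    simp only [Uin, Finset.sum_range_succ', mul_sub, sub_mul, Finset.sum_sub_distrib, mul_add]
    simp [h1]
    ring
  rw [e]
  have hs : OrdGE (∑ p ∈ Finset.range m,
    HahnSeries.single (0 : ℤ) (c ^ (p + 1)) * (y ^ (p + 1 + 1) - y' ^ (p + 1 + 1)) *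
      HahnSeries.single (((p + 1 : ℕ) : ℤ) * ((m : ℤ) + 1)) 1) (N + 1) := by
    intro i hi
    rw [HahnSeries.coeff_sum]
    apply Finset.sum_eq_zero
    intro p _
    refine (((ordGE_single 0 _).mul (ordGE_pow_sub hy hy' h (p + 1))).mul
      (ordGE_single _ 1)) i ?_
    push_cast
    nlinarith
  have := (ordGE_single 0 a).mul hs
  rwa [zero_add] at this

/-- Supported in degrees `-m, …, -1`. -/
def Supp (m : ℕ) (y : LaurentSeries ℂ) : Prop := OrdGE y (-m) ∧ ∀ i, 0 ≤ i → y.coeff i = 0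

theorem singPart_coeff (f : LaurentSeries ℂ) (k : ℤ) :
    (singPart f).coeff k = if k < 0 then f.coeff k else 0 := rfl

theorem Uin_zero (m : ℕ) (a c : ℂ) : Uin m a c 0 = 0 := by
  simp [Uin]

theorem coeff_C_mul (a : ℂ) (f : LaurentSeries ℂ) (i : ℤ) :
    (HahnSeries.single (0 : ℤ) a * f).coeff i = a * f.coeff i := by
  simp

theorem ordGE_zero (N : ℤ) : OrdGE 0 N := fun _ _ => rfl

theorem ordGE_Uin {m : ℕ} {a c : ℂ} {y : LaurentSeries ℂ} (hy : OrdGE y (-m)) :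
    OrdGE (Uin m a c y) (-m) := by
  have h := Uin_sub (a := a) (c := c) hy (ordGE_zero _) (N := -m) (by simpa using hy)
  intro i hi
  have := h i (by omega)
  rw [Uin_zero, sub_zero, sub_zero, HahnSeries.coeff_sub, coeff_C_mul, hy i hi] at this
  simpa using this

theorem supp_sing {m : ℕ} {a c : ℂ} {y : LaurentSeries ℂ} (hy : Supp m y) :
    Supp m (singPart (Uin m a c y)) := by
  constructor
  · intro i hi
    rw [singPart_coeff, ordGE_Uin hy.1 i hi]
    simp
  · intro i hi
    rw [singPart_coeff, if_neg (by omega)]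

theorem Uin_coeff_sub {m : ℕ} {a c : ℂ} {y y' : LaurentSeries ℂ} {N : ℤ} (hy : OrdGE y (-m))
    (hy' : OrdGE y' (-m)) (h : OrdGE (y - y') N) (i : ℤ) (hi : i ≤ N) :
    (Uin m a c y).coeff i - (Uin m a c y').coeff i = a * (y.coeff i - y'.coeff i) := by
  have := Uin_sub (a := a) (c := c) hy hy' h i (by omega)
  rw [HahnSeries.coeff_sub, HahnSeries.coeff_sub, coeff_C_mul, HahnSeries.coeff_sub] at this
  linear_combination this

theorem sing_inj {m : ℕ} {a c : ℂ} (ha : a ≠ 0) {y y' : LaurentSeries ℂ} (hy : Supp m y)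
    (hy' : Supp m y') (h : singPart (Uin m a c y) = singPart (Uin m a c y')) : y = y' := by
  have key : ∀ k : ℕ, OrdGE (y - y') (-m + k) := by
    intro k
    induction k with
    | zero =>
      intro i hi
      rw [HahnSeries.coeff_sub, hy.1 i (by simpa using hi), hy'.1 i (by simpa using hi), sub_zero]
    | succ k ih =>
      intro i hi
      push_cast at hi
      by_cases h0 : i < 0
      · have h1 := Uin_coeff_sub (a := a) (c := c) hy.1 hy'.1 ih i (by omega)
        have h2 := congrArg (fun f => HahnSeries.coeff f i) h
        simp only [singPart_coeff, if_pos h0] at h2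
        rw [h2, sub_self] at h1
        rw [HahnSeries.coeff_sub]
        exact (mul_eq_zero.1 h1.symm).resolve_left ha
      · rw [HahnSeries.coeff_sub, hy.2 i (by omega), hy'.2 i (by omega), sub_zero]
  ext i
  have := key (i + m + 1).toNat i (by omega)
  rw [HahnSeries.coeff_sub] at this
  exact sub_eq_zero.1 this

theorem sing_surj {m : ℕ} {a c : ℂ} (ha : a ≠ 0) {w : LaurentSeries ℂ} (hw : Supp m w) :
    ∃ y, Supp m y ∧ singPart (Uin m a c y) = w := by
  have key : ∀ k : ℕ, k ≤ m → ∃ y, Supp m y ∧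
      ∀ i < -(m : ℤ) + k, (Uin m a c y).coeff i = w.coeff i := by
    intro k
    induction k with
    | zero =>
      intro _
      refine ⟨0, ⟨ordGE_zero _, fun _ _ => rfl⟩, fun i hi => ?_⟩
      rw [Uin_zero, hw.1 i (by simpa using hi)]
      rfl
    | succ k ih =>
      intro hk
      obtain ⟨y, hy, hyi⟩ := ih (by omega)
      set N : ℤ := -(m : ℤ) + k with hN
      set b := (w.coeff N - (Uin m a c y).coeff N) / a with hb
      have hy' : Supp m (y + HahnSeries.single N b) := by
        refine ⟨hy.1.add ((ordGE_single N b).mono (by omega)), fun i hi => ?_⟩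
        rw [HahnSeries.coeff_add, hy.2 i hi, HahnSeries.coeff_single_of_ne (by omega), add_zero]
      refine ⟨_, hy', fun i hi => ?_⟩
      have h1 := Uin_coeff_sub (a := a) (c := c) hy'.1 hy.1 (N := N)
        (by simpa using ordGE_single N b) i (by push_cast at hi; omega)
      rw [HahnSeries.coeff_add, add_sub_cancel_left] at h1
      by_cases hiN : i = N
      · subst hiN
        rw [HahnSeries.coeff_single_same, hb, mul_div_cancel₀ _ ha] at h1
        linear_combination h1
      · rw [HahnSeries.coeff_single_of_ne hiN, hyi i (by push_cast at hi; omega)] at h1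
        linear_combination h1
  obtain ⟨y, hy, hyi⟩ := key m le_rfl
  refine ⟨y, hy, ?_⟩
  ext i
  rw [singPart_coeff]
  split_ifs with h
  · exact hyi i (by omega)
  · exact (hw.2 i (by omega)).symm

theorem xrec_succ (ζ : ℕ → ℂ) (m : ℕ) : xrec ζ (m + 1) =
    singPart (Uin m (((1 + ‖ζ (m + 1)‖ ^ 2 : ℝ) : ℂ)) (starRingEnd ℂ (ζ (m + 1))) (xrec ζ m))
      + HahnSeries.single (-(m : ℤ) - 1) (ζ (m + 1)) := rfl

theorem fac_ne (z : ℂ) : (((1 + ‖z‖ ^ 2 : ℝ) : ℂ)) ≠ 0 := by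
  have : (1 + ‖z‖ ^ 2 : ℝ) ≠ 0 := by positivity
  exact_mod_cast this

theorem supp_xrec (ζ : ℕ → ℂ) (m : ℕ) : Supp m (xrec ζ m) := by
  induction m with
  | zero => exact ⟨ordGE_zero _, fun _ _ => rfl⟩
  | succ m ih =>
    rw [xrec_succ]
    have h := supp_sing (a := (((1 + ‖ζ (m + 1)‖ ^ 2 : ℝ) : ℂ)))
      (c := starRingEnd ℂ (ζ (m + 1))) ih
    refine ⟨(h.1.mono (by push_cast; omega)).add ((ordGE_single _ _).mono (by push_cast; omega)),
      fun i hi => ?_⟩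
    rw [HahnSeries.coeff_add, h.2 i hi, HahnSeries.coeff_single_of_ne (by omega), add_zero]

theorem xrec_top (ζ : ℕ → ℂ) (m : ℕ) : (xrec ζ (m + 1)).coeff (-(m : ℤ) - 1) = ζ (m + 1) := by
  rw [xrec_succ, HahnSeries.coeff_add, (supp_sing (supp_xrec ζ m)).1 _ (by omega),
    HahnSeries.coeff_single_same, zero_add]

theorem xrec_congr (ζ ζ' : ℕ → ℂ) (m : ℕ) (h : ∀ i, 1 ≤ i → i ≤ m → ζ i = ζ' i) :
    xrec ζ m = xrec ζ' m := by
  induction m with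
  | zero => rfl
  | succ m ih =>
    rw [xrec_succ, xrec_succ, ih (fun i h1 h2 => h i h1 (by omega)), h (m + 1) (by omega) le_rfl]

theorem xrec_inj (ζ ζ' : ℕ → ℂ) (m : ℕ) (h : xrec ζ m = xrec ζ' m) :
    ∀ i, 1 ≤ i → i ≤ m → ζ i = ζ' i := by
  induction m with
  | zero => intro i h1 h2; omega
  | succ m ih =>
    have ht : ζ (m + 1) = ζ' (m + 1) := by rw [← xrec_top ζ m, ← xrec_top ζ' m, h]
    rw [xrec_succ, xrec_succ, ht] at h
    have h2 := sing_inj (fac_ne _) (supp_xrec ζ m) (supp_xrec ζ' m) (add_right_cancel h)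
    intro i h1 h3
    rcases Nat.lt_or_ge m i with h4 | h4
    · have : i = m + 1 := by omega
      rw [this, ht]
    · exact ih h2 i h1 h4

theorem xrec_surj (m : ℕ) : ∀ w, Supp m w → ∃ ζ : ℕ → ℂ, xrec ζ m = w := by
  induction m with
  | zero =>
    intro w hw
    refine ⟨0, ?_⟩
    ext i
    rcases lt_or_ge i 0 with h | h
    · rw [hw.1 i (by simpa using h)]; rfl
    · rw [hw.2 i h]; rfl
  | succ m ih =>
    intro w hw
    set t := w.coeff (-(m : ℤ) - 1) with ht
    have hw' : Supp m (w - HahnSeries.single (-(m : ℤ) - 1) t) := by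
      constructor
      · intro i hi
        rw [HahnSeries.coeff_sub]
        by_cases h : i = -(m : ℤ) - 1
        · rw [h, HahnSeries.coeff_single_same, sub_self]
        · rw [HahnSeries.coeff_single_of_ne h, hw.1 i (by push_cast; omega), sub_zero]
      · intro i hi
        rw [HahnSeries.coeff_sub, hw.2 i hi, HahnSeries.coeff_single_of_ne (by omega), sub_zero]
    obtain ⟨y, hy, hyw⟩ := sing_surj (c := starRingEnd ℂ t) (fac_ne t) hw'
    obtain ⟨ζ, hζ⟩ := ih y hy
    refine ⟨Function.update ζ (m + 1) t, ?_⟩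
    have hc : xrec (Function.update ζ (m + 1) t) m = y := by
      rw [← hζ]
      apply xrec_congr
      intro i _ h2
      exact Function.update_of_ne (by omega) _ _
    rw [xrec_succ, hc, Function.update_self, hyw, sub_add_cancel]

/-- `Φ_n : ℂⁿ → ℂⁿ` is a bijection. -/
theorem stmt13 (n : ℕ) (hn : 1 ≤ n) : Function.Bijective (Phi n) := by
  constructor
  · intro ζ ζ' h
    have hx : xrec (fun i => if h : i - 1 < n ∧ 1 ≤ i then ζ ⟨i - 1, h.1⟩ else 0) n
        = xrec (fun i => if h : i - 1 < n ∧ 1 ≤ i then ζ' ⟨i - 1, h.1⟩ else 0) n := by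
      ext i
      by_cases h1 : i < -(n : ℤ)
      · rw [(supp_xrec _ n).1 i h1, (supp_xrec _ n).1 i h1]
      by_cases h2 : 0 ≤ i
      · rw [(supp_xrec _ n).2 i h2, (supp_xrec _ n).2 i h2]
      have h3 := congrFun h ⟨(-i - 1).toNat, by omega⟩
      have h4 : -(((-i - 1).toNat : ℕ) : ℤ) - 1 = i := by omega
      simp only [Phi, h4] at h3
      exact h3
    funext j
    have := xrec_inj _ _ n hx (j + 1) (by omega) (by omega)
    simpa using this
  · intro v
    let w : LaurentSeries ℂ := ∑ j : Fin n, HahnSeries.single (-((j : ℕ) : ℤ) - 1) (v j)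
    have hw : Supp n w := by
      constructor
      · intro i hi
        rw [HahnSeries.coeff_sum]
        exact Finset.sum_eq_zero fun j _ => HahnSeries.coeff_single_of_ne (by omega)
      · intro i hi
        rw [HahnSeries.coeff_sum]
        exact Finset.sum_eq_zero fun j _ => HahnSeries.coeff_single_of_ne (by omega)
    obtain ⟨ζ, hζ⟩ := xrec_surj n w hw
    refine ⟨fun j => ζ (j + 1), ?_⟩
    funext j
    have hc : xrec (fun i => if h : i - 1 < n ∧ 1 ≤ i then
        (fun j : Fin n => ζ (j + 1)) ⟨i - 1, h.1⟩ else 0) n = w := by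
      rw [← hζ]
      apply xrec_congr
      intro i h1 h2
      have : i - 1 < n ∧ 1 ≤ i := by omega
      simp only [dif_pos this]
      congr 1
      omega
    unfold Phi
    rw [hc, HahnSeries.coeff_sum, Finset.sum_eq_single j]
    · exact HahnSeries.coeff_single_same _ _
    · intro k _ hk
      apply HahnSeries.coeff_single_of_ne
      intro h
      apply hk
      ext
      omega
    · simp
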